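/- Let m be a positive integer, n ≥ 1, a ∈ ℝⁿ a unit vector, λ > 0. Define G_λ(t,x) = (2π)^{-n} ∫_{ℝⁿ} e^{i x·ξ} e^{-t P_λ(ξ)} dξ and, for complex μ with sufficiently large real part, h(x,μ) = ∫₀^∞ e^{-μ t} G_λ(t,x) dt (the integral kernel of the resolvent (μ + P_λ(D))^{-1}). Then there exist constants c ∈ (0,1) and C > 0, depending only on n and m, such that for all ε ∈ (0,c), all λ > 0, all unit vectors a, and all complex μ with Re μ > (b_m + ε/2) λ^{2m}: ∫_{ℝⁿ} |h(x,μ)| dx ≤ C ε^{-(n+1)} / |μ - (b_m + ε/2) λ^{2m}|. -/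

import Mathlib

open Real MeasureTheory

/-- The constant `b_m = (sin(π/(4m-2)))^{-(2m-1)}`. -/
noncomputable def bConst (m : ℕ) : ℝ :=
  (Real.sin (Real.pi / (4 * (m : ℝ) - 2)))⁻¹ ^ (2 * m - 1)

/-- The symbol `P_λ(ξ) = (|ξ|² - λ² + 2iλ a·ξ)^m` of the conjugated operator
`e^{-λ a·x}(-Δ)^m e^{λ a·x}`. -/
noncomputable def Psymb (n m : ℕ) (a : EuclideanSpace ℝ (Fin n)) (lam : ℝ)
    (ξ : EuclideanSpace ℝ (Fin n)) : ℂ :=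
  (((‖ξ‖ ^ 2 - lam ^ 2 : ℝ) : ℂ) + ((2 * lam * (inner ℝ a ξ : ℝ) : ℝ) : ℂ) * Complex.I) ^ m

/-- `G_λ(t,x) = (2π)^{-n} ∫_{ℝⁿ} e^{i x·ξ} e^{-t P_λ(ξ)} dξ`, the heat kernel of the conjugated
operator `P_λ(D)`. -/
noncomputable def Gker (n m : ℕ) (a : EuclideanSpace ℝ (Fin n)) (lam : ℝ) (t : ℝ)
    (x : EuclideanSpace ℝ (Fin n)) : ℂ :=
  ((2 * Real.pi) ^ (-(n : ℝ)) : ℝ) •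
    ∫ ξ : EuclideanSpace ℝ (Fin n),
      Complex.exp (Complex.I * ((inner ℝ x ξ : ℝ) : ℂ)) *
        Complex.exp (-(t : ℂ) * Psymb n m a lam ξ)

/-- `h(x,μ) = ∫₀^∞ e^{-μ t} G_λ(t,x) dt`, the kernel of the resolvent `(μ + P_λ(D))^{-1}`. -/
noncomputable def resKer (n m : ℕ) (a : EuclideanSpace ℝ (Fin n)) (lam : ℝ)
    (x : EuclideanSpace ℝ (Fin n)) (μ : ℂ) : ℂ :=
  ∫ t in Set.Ioi (0 : ℝ), Complex.exp (-μ * (t : ℂ)) * Gker n m a lam t x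

/-!
Translating the frequency integral by `iλa` turns the kernel of `e^{-tP_λ(D)}` into `e^{λ a·x}`
times the kernel of `e^{-t(-Δ)^m}`. For a complex time `z` in the sector `|Im z| ≤ 2h Re z`, a
second translation, to `ξ + iη` with `η = λa + u`, bounds the latter by means of the inequality
`Re ((ξ + iη)·(ξ + iη))^m ≥ -b_m |η|^{2m}`. The choice of `u` parallel to `x`, of length
`h L(z)` with `L(z) = λ + (Re z)^{-1/(2m)}`, gains the decay `e^{-h L(z) |x|}` and costs only a
relative error `O(h)` in the exponent `b_m λ^{2m} Re z`. The inequality follows by writing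
`(ξ + iη)·(ξ + iη) = ζ²`, where `|Im ζ| ≤ |η|`, and minimizing `s ↦ Re (s + i)^{2m}`: at the minimum
`Re (s + i)^{2m-1} = 0`, so `arg (s + i)` has distance at least `π/(4m-2)` from `0` and `π`, and
`|s + i| ≤ 1 / sin (π/(4m-2))`.

The Laplace integral over `t > 0` is then rotated onto the ray through `1 ± ih`, which improves the
rate of decay from `Re ν` to `Re ν + h |Im ν|`, where `ν = μ - (b_m + O(h)) λ^{2m}`. Integrating
first in `x` costs `h^{-n}`, uniformly in `t` because the prefactor `L^n` cancels; the integral in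
`t` then costs `(h |ν|)⁻¹` up to a constant. Take `h` to be a small multiple of `ε`.
-/

open Set Filter Topology

section HolomorphicIntegrals

theorem aestronglyMeasurable_of_hasDerivAt_param {𝕜 G α : Type*} [NontriviallyNormedField 𝕜]
    [NormedAddCommGroup G] [NormedSpace 𝕜 G] [MeasurableSpace α] {ν : Measure α}
    {f : 𝕜 → α → G} {f' : α → G} {w₀ : 𝕜} (hf : ∀ᶠ w in 𝓝 w₀, AEStronglyMeasurable (f w) ν)
    (hf' : ∀ᵐ x ∂ν, HasDerivAt (f · x) (f' x) w₀) : AEStronglyMeasurable f' ν := by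
  obtain ⟨u, hu⟩ := exists_seq_tendsto (𝓝[≠] w₀)
  obtain ⟨N, hN⟩ := eventually_atTop.1 ((hu.mono_right nhdsWithin_le_nhds).eventually hf)
  refine aestronglyMeasurable_of_tendsto_ae atTop
    (f := fun k x => slope (f · x) w₀ (u (k + N))) (fun k => ?_) ?_
  · exact ((hN _ (N.le_add_left k)).sub hf.self_of_nhds).const_smul _
  · filter_upwards [hf'] with x hx
    exact hx.tendsto_slope.comp (hu.comp (tendsto_add_atTop_nat N))

theorem differentiableOn_integral_of_locally_dominated {G α : Type*} [NormedAddCommGroup G]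
    [NormedSpace ℂ G] [MeasurableSpace α] {ν : Measure α} {f : ℂ → α → G} {U : Set ℂ}
    (hU : IsOpen U) (hmeas : ∀ w ∈ U, AEStronglyMeasurable (f w) ν)
    (hdiff : ∀ᵐ x ∂ν, DifferentiableOn ℂ (f · x) U)
    (hdom : ∀ w₀ ∈ U, ∃ g : α → ℝ, Integrable g ν ∧ ∃ V ∈ 𝓝 w₀, ∀ᵐ x ∂ν, ∀ w ∈ V, ‖f w x‖ ≤ g x) :
    DifferentiableOn ℂ (fun w => ∫ x, f w x ∂ν) U := by
  intro w₀ hw₀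
  obtain ⟨g, hg, V, hV, hfg⟩ := hdom w₀ hw₀
  obtain ⟨R, hR, hball⟩ := Metric.mem_nhds_iff.1 (inter_mem hV (hU.mem_nhds hw₀))
  have hmem : ∀ w ∈ Metric.ball w₀ (R / 2), Metric.closedBall w (R / 2) ⊆ V ∩ U := fun w hw v hv =>
    hball <| Metric.mem_ball.2 <| by
      linarith [dist_triangle v w w₀, Metric.mem_ball.1 hw, Metric.mem_closedBall.1 hv]
  have hself : ∀ w ∈ Metric.ball w₀ (R / 2), w ∈ V ∩ U := fun w hw =>
    hmem w hw (Metric.mem_closedBall_self (by positivity))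
  have hhalf : Metric.ball w₀ (R / 2) ∈ 𝓝 w₀ := Metric.ball_mem_nhds _ (by positivity)
  have hderiv : ∀ᵐ x ∂ν, ∀ w ∈ Metric.ball w₀ (R / 2),
      HasDerivAt (f · x) (deriv (f · x) w) w := by
    filter_upwards [hdiff] with x hx w hw
    exact (hx.differentiableAt (hU.mem_nhds (hself w hw).2)).hasDerivAt
  have hmeas₀ : ∀ᶠ w in 𝓝 w₀, AEStronglyMeasurable (f w) ν :=
    mem_of_superset (hU.mem_nhds hw₀) hmeas
  refine (hasDerivAt_integral_of_dominated_loc_of_deriv_le (F := f)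
    (bound := fun x => g x / (R / 2)) hhalf hmeas₀ ?_ ?_ ?_ (hg.div_const _)
    hderiv).2.differentiableAt.differentiableWithinAt
  · exact hg.mono' (hmeas w₀ hw₀) (hfg.mono fun x hx => hx w₀ (mem_of_mem_nhds hV))
  · exact aestronglyMeasurable_of_hasDerivAt_param hmeas₀
      (hderiv.mono fun x hx => hx w₀ (mem_of_mem_nhds hhalf))
  · -- Cauchy's estimate turns the bound on `f` into one on its derivative.
    filter_upwards [hdiff, hfg] with x hx hxg w hw
    refine Complex.norm_deriv_le_of_forall_mem_sphere_norm_le (by positivity) ?_ fun v hv =>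
      hxg v (hmem w hw (Metric.sphere_subset_closedBall hv)).1
    exact (hx.mono fun v hv =>
      (hmem w hw (Metric.closure_ball_subset_closedBall hv)).2).diffContOnCl

theorem eqOn_const_of_eventually_eq_on_real {G : Type*} [NormedAddCommGroup G] [NormedSpace ℂ G]
    [CompleteSpace G] {F : ℂ → G} {U : Set ℂ} (hU : IsOpen U) (hUc : IsPreconnected U)
    (hF : DifferentiableOn ℂ F U) {x₀ : ℝ} (hx₀ : (x₀ : ℂ) ∈ U) {c : G}
    (hc : ∀ᶠ s : ℝ in 𝓝 x₀, F s = c) : EqOn F (fun _ => c) U := by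
  refine (hF.analyticOnNhd hU).eqOn_of_preconnected_of_frequently_eq analyticOnNhd_const hUc hx₀ ?_
  have hreal : Tendsto (fun s : ℝ => (s : ℂ)) (𝓝[≠] x₀) (𝓝[≠] (x₀ : ℂ)) :=
    Complex.continuous_ofReal.continuousWithinAt.tendsto_nhdsWithin fun s hs => by simpa using hs
  exact hreal.frequently (hc.filter_mono nhdsWithin_le_nhds).frequently

/-- The open sector `|Im z| < θ Re z` about the positive real axis, as a convex cone. -/
def sector (θ : ℝ) : ConvexCone ℝ ℂ where
  carrier := {z | |z.im| < θ * z.re}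
  smul_mem' c hc z hz := by
    simpa [abs_mul, abs_of_pos hc, mul_left_comm θ] using mul_lt_mul_of_pos_left hz hc
  add_mem' z hz w hw := by
    simp only [mem_ofPred_eq, Complex.add_im, Complex.add_re, mul_add] at *
    exact (abs_add_le _ _).trans_lt (add_lt_add hz hw)

theorem mem_sector {θ : ℝ} {z : ℂ} : z ∈ sector θ ↔ |z.im| < θ * z.re := Iff.rfl

theorem isOpen_sector (θ : ℝ) : IsOpen (sector θ : Set ℂ) :=
  isOpen_lt Complex.continuous_im.abs (continuous_const.mul Complex.continuous_re)

theorem re_pos_of_mem_sector {θ : ℝ} (hθ : 0 < θ) {z : ℂ} (hz : z ∈ sector θ) : 0 < z.re :=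
  pos_of_mul_pos_right ((abs_nonneg _).trans_lt hz) hθ.le

theorem differentiableOn_integral_ray {G : Type*} [NormedAddCommGroup G] [NormedSpace ℂ G]
    {S : ConvexCone ℝ ℂ} (hS : IsOpen (S : Set ℂ)) {f : ℂ → G} {ν : ℂ} {K : ℝ}
    (hf : DifferentiableOn ℂ f S) (hbound : ∀ z ∈ S, ‖f z‖ ≤ K * Real.exp (-(ν * z).re)) :
    DifferentiableOn ℂ (fun p => ∫ t in Ioi (0 : ℝ), p • f (t • p)) (S ∩ {p | 0 < (ν * p).re}) := by
  have hre : Continuous fun p : ℂ => (ν * p).re := by fun_prop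
  have hopen : IsOpen ((S : Set ℂ) ∩ {p | 0 < (ν * p).re}) :=
    hS.inter (isOpen_lt continuous_const hre)
  have hcomp : ∀ t ∈ Ioi (0 : ℝ), DifferentiableOn ℂ (fun p => f (t • p)) S := fun t ht =>
    hf.comp (by fun_prop) fun p hp => S.smul_mem ht hp
  refine differentiableOn_integral_of_locally_dominated hopen (fun p hp => ?_) ?_ fun p₀ hp₀ => ?_
  · refine ContinuousOn.aestronglyMeasurable ?_ measurableSet_Ioi
    exact continuousOn_const.smul <|
      hf.continuousOn.comp (by fun_prop) fun t ht => S.smul_mem ht hp.1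
  · filter_upwards [ae_restrict_mem measurableSet_Ioi] with t ht
    exact differentiableOn_id.smul ((hcomp t ht).mono inter_subset_left)
  · obtain ⟨γ, hγ, hγp₀⟩ := exists_between (show 0 < (ν * p₀).re from hp₀.2)
    refine ⟨fun t => (‖p₀‖ + 1) * (K * Real.exp (-γ * t)),
      ((integrableOn_exp_mul_Ioi (neg_lt_zero.2 hγ) 0).const_mul K).const_mul _,
      {p | ‖p‖ < ‖p₀‖ + 1} ∩ (S ∩ {p | γ < (ν * p).re}), ?_, ?_⟩
    · exact ((isOpen_lt continuous_norm continuous_const).inter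
        (hS.inter (isOpen_lt continuous_const hre))).mem_nhds ⟨lt_add_one ‖p₀‖, hp₀.1, hγp₀⟩
    · filter_upwards [ae_restrict_mem measurableSet_Ioi] with t ht p hp
      have hfp := hbound (t • p) (S.smul_mem ht hp.2.1)
      have hK : 0 ≤ K := nonneg_of_mul_nonneg_left ((norm_nonneg _).trans hfp) (Real.exp_pos _)
      rw [norm_smul]
      refine mul_le_mul hp.1.le (hfp.trans ?_) (norm_nonneg _) (by positivity)
      have hre_smul : (ν * (t • p)).re = t * (ν * p).re := by
        rw [mul_smul_comm, Complex.smul_re, smul_eq_mul]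
      rw [hre_smul]
      gcongr
      nlinarith [mul_le_mul_of_nonneg_left hp.2.2.le (mem_Ioi.1 ht).le]

theorem integral_Ioi_eq_integral_ray {G : Type*} [NormedAddCommGroup G] [NormedSpace ℂ G]
    [CompleteSpace G] {S : ConvexCone ℝ ℂ} (hS : IsOpen (S : Set ℂ)) {f : ℂ → G} {ν : ℂ} {K : ℝ}
    (hf : DifferentiableOn ℂ f S) (hbound : ∀ z ∈ S, ‖f z‖ ≤ K * Real.exp (-(ν * z).re))
    (h1 : 1 ∈ S) (hν : 0 < ν.re) {p : ℂ} (hp : p ∈ S) (hνp : 0 < (ν * p).re) :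
    ∫ t in Ioi (0 : ℝ), f t = ∫ t in Ioi (0 : ℝ), p • f (t • p) := by
  set U : Set ℂ := S ∩ {p | 0 < (ν * p).re}
  have hopen : IsOpen U := hS.inter (isOpen_lt continuous_const (by fun_prop))
  have hconv : Convex ℝ U := S.convex.inter <|
    convex_halfSpace_gt (f := fun p : ℂ => (ν * p).re) ⟨fun p q => by simp [mul_add], fun c p => by
      rw [mul_smul_comm, Complex.smul_re]⟩ 0
  -- Dilating a ray by a positive real factor is a change of variables in the integral.
  have hdilate : ∀ s : ℝ, 0 < s →
      ∫ t in Ioi (0 : ℝ), (s : ℂ) • f (t • (s : ℂ)) = ∫ t in Ioi (0 : ℝ), f t := by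
    intro s hs
    have hcv := integral_comp_mul_right_Ioi (fun t : ℝ => f t) 0 hs
    simp only [zero_mul] at hcv
    rw [integral_smul]
    simp only [Complex.real_smul, ← Complex.ofReal_mul]
    rw [hcv, Complex.coe_smul, smul_inv_smul₀ hs.ne']
  refine (eqOn_const_of_eventually_eq_on_real hopen hconv.isPreconnected
    (differentiableOn_integral_ray hS hf hbound) (x₀ := 1) ⟨by simpa using h1, by simpa using hν⟩
    ((lt_mem_nhds one_pos).mono hdilate) ⟨hp, hνp⟩).symm

end HolomorphicIntegrals

section RadialExponentials

variable {E : Type*} [NormedAddCommGroup E] [NormedSpace ℝ E] [FiniteDimensional ℝ E]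
  [MeasurableSpace E] [BorelSpace E] (ν : Measure E) [ν.IsAddHaarMeasure]

theorem integrable_exp_neg_mul_norm {c : ℝ} (hc : 0 < c) :
    Integrable (fun x : E => Real.exp (-(c * ‖x‖))) ν := by
  cases subsingleton_or_nontrivial E with
  | inl _ => exact .of_finite
  | inr _ =>
    refine (integrable_fun_norm_addHaar ν (f := fun r => Real.exp (-(c * r)))).2 ?_
    have hs : (-1 : ℝ) < ((Module.finrank ℝ E - 1 : ℕ) : ℝ) := by
      linarith [Nat.cast_nonneg (α := ℝ) (Module.finrank ℝ E - 1)]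
    simpa using integrableOn_rpow_mul_exp_neg_mul_rpow hs one_pos hc

theorem integral_exp_neg_mul_norm {c : ℝ} (hc : 0 < c) :
    ∫ x : E, Real.exp (-(c * ‖x‖)) ∂ν =
      c⁻¹ ^ Module.finrank ℝ E * ∫ x : E, Real.exp (-‖x‖) ∂ν := by
  simpa [norm_smul, abs_of_pos hc] using
    Measure.integral_comp_smul_of_nonneg ν (fun x : E => Real.exp (-‖x‖)) c (hR := hc.le)

theorem pow_mul_exp_neg_mul_le {c y : ℝ} (hc : 0 < c) (hy : 0 ≤ y) (d : ℕ) :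
    y ^ d * Real.exp (-(c * y)) ≤ d.factorial / c ^ d := by
  have hexp := Real.pow_div_factorial_le_exp (c * y) (by positivity) d
  rw [div_le_iff₀ (by positivity), mul_pow] at hexp
  rw [Real.exp_neg, ← div_eq_mul_inv, div_le_div_iff₀ (Real.exp_pos _) (by positivity)]
  linarith

end RadialExponentials

section SpaceTimeMajorant

/-- The space-time majorant `e^{-γt} L(t)^d e^{-h L(t) |x|}` of the rotated Laplace integrand, where
`d` is the dimension of the space and `L(t)⁻¹` the length scale at time `t`. -/
noncomputable def spaceTimeMajorant {E : Type*} [NormedAddCommGroup E] [NormedSpace ℝ E]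
    (L : ℝ → ℝ) (γ h t : ℝ) (x : E) : ℝ :=
  Real.exp (-γ * t) * (L t ^ Module.finrank ℝ E * Real.exp (-(h * ‖x‖ * L t)))

variable {E : Type*} [NormedAddCommGroup E] [NormedSpace ℝ E] [FiniteDimensional ℝ E]
  [MeasurableSpace E] [BorelSpace E] (ν : Measure E) [ν.IsAddHaarMeasure]
  {L : ℝ → ℝ} {γ h : ℝ}

theorem integrable_spaceTimeMajorant_right (hh : 0 < h) {t : ℝ} (ht : 0 < L t) :
    Integrable (spaceTimeMajorant (E := E) L γ h t) ν := by
  unfold spaceTimeMajorant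
  simp only [mul_right_comm h _ (L t)]
  exact ((integrable_exp_neg_mul_norm ν (mul_pos hh ht)).const_mul _).const_mul _

theorem integral_spaceTimeMajorant_right (hh : 0 < h) {t : ℝ} (ht : 0 < L t) :
    ∫ x : E, spaceTimeMajorant L γ h t x ∂ν =
      (h⁻¹ ^ Module.finrank ℝ E * ∫ x : E, Real.exp (-‖x‖) ∂ν) * Real.exp (-γ * t) := by
  simp only [spaceTimeMajorant, mul_right_comm h _ (L t)]
  rw [integral_const_mul, integral_const_mul, integral_exp_neg_mul_norm ν (mul_pos hh ht),
    mul_inv, mul_pow, inv_pow (L t)]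
  field_simp

theorem integrable_spaceTimeMajorant (hL : Measurable L) (hLpos : ∀ t, 0 < t → 0 < L t)
    (hγ : 0 < γ) (hh : 0 < h) :
    Integrable (Function.uncurry (spaceTimeMajorant (E := E) L γ h))
      ((volume.restrict (Ioi 0)).prod ν) := by
  have hmeas : Measurable (Function.uncurry (spaceTimeMajorant (E := E) L γ h)) := by
    simp only [spaceTimeMajorant, Function.uncurry_def]
    fun_prop
  refine (integrable_prod_iff hmeas.aestronglyMeasurable).2 ⟨?_, ?_⟩
  · filter_upwards [ae_restrict_mem measurableSet_Ioi] with t ht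
    exact integrable_spaceTimeMajorant_right ν hh (hLpos t ht)
  · refine ((integrableOn_exp_mul_Ioi (neg_lt_zero.2 hγ) 0).const_mul
      (h⁻¹ ^ Module.finrank ℝ E * ∫ x : E, Real.exp (-‖x‖) ∂ν)).congr ?_
    filter_upwards [ae_restrict_mem measurableSet_Ioi] with t ht
    rw [← integral_spaceTimeMajorant_right ν hh (hLpos t ht)]
    refine integral_congr_ae (Eventually.of_forall fun x => (Real.norm_of_nonneg ?_).symm)
    have := hLpos t ht
    simp only [spaceTimeMajorant]
    positivity

theorem integral_integral_spaceTimeMajorant (hL : Measurable L) (hLpos : ∀ t, 0 < t → 0 < L t)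
    (hγ : 0 < γ) (hh : 0 < h) :
    ∫ x : E, (∫ t in Ioi (0 : ℝ), spaceTimeMajorant L γ h t x) ∂ν =
      (h⁻¹ ^ Module.finrank ℝ E * ∫ x : E, Real.exp (-‖x‖) ∂ν) * γ⁻¹ := by
  rw [← integral_integral_swap (integrable_spaceTimeMajorant ν hL hLpos hγ hh),
    setIntegral_congr_fun measurableSet_Ioi fun t ht =>
      integral_spaceTimeMajorant_right ν hh (hLpos t ht),
    integral_const_mul, integral_exp_mul_Ioi (neg_lt_zero.2 hγ) 0]
  simp

theorem integral_norm_le_of_norm_le_spaceTimeMajorant {G : Type*} [NormedAddCommGroup G]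
    {F : E → G} {A : ℝ} (hL : Measurable L) (hLpos : ∀ t, 0 < t → 0 < L t) (hγ : 0 < γ)
    (hh : 0 < h)
    (hF : ∀ᵐ x ∂ν, IntegrableOn (spaceTimeMajorant L γ h · x) (Ioi 0) →
      ‖F x‖ ≤ A * ∫ t in Ioi (0 : ℝ), spaceTimeMajorant L γ h t x) :
    ∫ x, ‖F x‖ ∂ν ≤
      A * ((h⁻¹ ^ Module.finrank ℝ E * ∫ x : E, Real.exp (-‖x‖) ∂ν) * γ⁻¹) := by
  have hint := integrable_spaceTimeMajorant ν hL hLpos hγ hh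
  rw [← integral_integral_spaceTimeMajorant ν hL hLpos hγ hh, ← integral_const_mul]
  refine integral_mono_of_nonneg (Eventually.of_forall fun _ => norm_nonneg _)
    (hint.integral_prod_right.const_mul A) ?_
  filter_upwards [hF, hint.prod_left_ae] with x hFx hx using hFx hx

end SpaceTimeMajorant

section ComplexNormSq

variable {E : Type*} [NormedAddCommGroup E] [InnerProductSpace ℝ E]

/-- The square `(ξ + iη)·(ξ + iη)` of a complexified vector, for the bilinear extension of the inner
product: the symbol of the Laplacian at a complex frequency. -/
noncomputable def complexNormSq (ξ η : E) : ℂ :=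
  ((‖ξ‖ ^ 2 - ‖η‖ ^ 2 : ℝ) : ℂ) + ((2 * inner ℝ η ξ : ℝ) : ℂ) * Complex.I

theorem re_complexNormSq (ξ η : E) : (complexNormSq ξ η).re = ‖ξ‖ ^ 2 - ‖η‖ ^ 2 := by
  simp [complexNormSq, -Complex.ofReal_sub, -Complex.ofReal_pow]

theorem im_complexNormSq (ξ η : E) : (complexNormSq ξ η).im = 2 * inner ℝ η ξ := by
  simp [complexNormSq, -Complex.ofReal_sub, -Complex.ofReal_pow]

theorem continuous_complexNormSq_left (η : E) : Continuous fun ξ => complexNormSq ξ η := by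
  unfold complexNormSq
  fun_prop

theorem norm_complexNormSq_le (ξ η : E) : ‖complexNormSq ξ η‖ ≤ ‖ξ‖ ^ 2 + ‖η‖ ^ 2 := by
  refine le_of_sq_le_sq ?_ (by positivity)
  rw [Complex.sq_norm, Complex.normSq_apply, re_complexNormSq, im_complexNormSq]
  have hinner := sq_le_sq' (neg_le_of_abs_le (abs_real_inner_le_norm η ξ))
    (real_inner_le_norm η ξ)
  linear_combination 4 * hinner

theorem norm_complexNormSq_sub_le (ξ η : E) :
    ‖complexNormSq ξ η - (‖ξ‖ : ℂ) ^ 2‖ ≤ ‖η‖ ^ 2 + 2 * (‖η‖ * ‖ξ‖) := by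
  have hsplit : complexNormSq ξ η - (‖ξ‖ : ℂ) ^ 2 =
      ((-‖η‖ ^ 2 : ℝ) : ℂ) + ((2 * inner ℝ η ξ : ℝ) : ℂ) * Complex.I := by
    unfold complexNormSq
    push_cast
    ring
  rw [hsplit]
  refine (norm_add_le _ _).trans (add_le_add (by simp) ?_)
  simpa using abs_real_inner_le_norm η ξ

theorem complexNormSq_add_smul (ξ η : E) (w : ℂ) :
    complexNormSq (ξ + w.re • η) (w.im • η) =
      (‖ξ‖ : ℂ) ^ 2 + 2 * w * (inner ℝ η ξ : ℝ) + w ^ 2 * (‖η‖ : ℂ) ^ 2 := by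
  apply Complex.ext
  · rw [re_complexNormSq, norm_add_sq_real, norm_smul, norm_smul, real_inner_smul_right,
      real_inner_comm, mul_pow, mul_pow, Real.norm_eq_abs, Real.norm_eq_abs, sq_abs, sq_abs]
    simp [sq]
    ring
  · rw [im_complexNormSq, inner_add_right, real_inner_smul_left, real_inner_smul_left,
      real_inner_smul_right, real_inner_self_eq_norm_sq]
    simp [sq]
    ring

end ComplexNormSq

section SymbolLowerBound

theorem exists_norm_pow_sub_ofReal_pow_le (m : ℕ) {ε : ℝ} (hε : 0 < ε) :
    ∃ δ > 0, ∀ (w : ℂ) (r : ℝ), 0 ≤ r → ‖w - r‖ ≤ δ * r → ‖w ^ m - r ^ m‖ ≤ ε * r ^ m := by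
  have hcont : ContinuousAt (fun w : ℂ => w ^ m) 1 := by fun_prop
  obtain ⟨δ, hδ, hclose⟩ := Metric.continuousAt_iff.1 hcont ε hε
  refine ⟨δ / 2, by positivity, fun w r hr hw => ?_⟩
  rcases hr.eq_or_lt with rfl | hr
  · obtain rfl : w = 0 := by simpa using hw
    simpa using mul_nonneg hε.le (pow_nonneg le_rfl m)
  have hr' : (r : ℂ) ≠ 0 := by exact_mod_cast hr.ne'
  have hdist : dist (w / r) 1 < δ := by
    rw [dist_eq_norm, div_sub_one hr', norm_div, Complex.norm_of_nonneg hr.le, div_lt_iff₀ hr]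
    linarith [mul_pos hδ hr]
  have hscale : w ^ m - (r : ℂ) ^ m = ((r ^ m : ℝ) : ℂ) * ((w / r) ^ m - 1 ^ m) := by
    rw [div_pow, one_pow, Complex.ofReal_pow, mul_sub, mul_div_cancel₀ _ (pow_ne_zero m hr'),
      mul_one]
  rw [hscale, norm_mul, Complex.norm_of_nonneg (by positivity), mul_comm, ← dist_eq_norm]
  exact mul_le_mul_of_nonneg_right (hclose hdist).le (by positivity)

theorem exists_norm_complexNormSq_pow_sub_le (E : Type*) [NormedAddCommGroup E]
    [InnerProductSpace ℝ E] (m : ℕ) :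
    ∃ δ > 0, ∀ ξ η : E, ‖η‖ ≤ δ * ‖ξ‖ →
      ‖complexNormSq ξ η ^ m - (‖ξ‖ : ℂ) ^ (2 * m)‖ ≤ 4⁻¹ * ‖ξ‖ ^ (2 * m) := by
  obtain ⟨δ, hδ, hclose⟩ := exists_norm_pow_sub_ofReal_pow_le m (ε := 4⁻¹) (by norm_num)
  refine ⟨min 1 (δ / 3), by positivity, fun ξ η hη => ?_⟩
  rw [pow_mul, pow_mul, ← Complex.ofReal_pow]
  refine hclose _ _ (sq_nonneg _) ?_
  have hle_one : ‖η‖ ≤ 1 * ‖ξ‖ := hη.trans (by gcongr; exact min_le_left _ _)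
  have hle_δ : ‖η‖ ≤ δ / 3 * ‖ξ‖ := hη.trans (by gcongr; exact min_le_right _ _)
  rw [Complex.ofReal_pow]
  refine (norm_complexNormSq_sub_le ξ η).trans ?_
  nlinarith [norm_nonneg ξ, norm_nonneg η]

theorem sin_pi_div_two_mul_pos {N : ℕ} (hN : N ≠ 0) : 0 < Real.sin (π / (2 * N)) := by
  have hN' : (1 : ℝ) ≤ N := Nat.one_le_cast.2 (Nat.one_le_iff_ne_zero.2 hN)
  refine Real.sin_pos_of_pos_of_lt_pi (by positivity) (div_lt_self pi_pos ?_)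
  linarith

theorem pi_div_two_mul_le_of_cos_nat_mul_eq_zero {N : ℕ} {θ : ℝ} (hN : N ≠ 0) (hθ : 0 < θ)
    (hcos : Real.cos (N * θ) = 0) : π / (2 * N) ≤ θ := by
  by_contra! hlt
  have hN' : (0 : ℝ) < N := Nat.cast_pos.2 (Nat.pos_of_ne_zero hN)
  rw [lt_div_iff₀ (by positivity)] at hlt
  have hpos : 0 < N * θ := mul_pos hN' hθ
  exact (Real.cos_pos_of_mem_Ioo ⟨by linarith [pi_pos], by linarith⟩).ne' hcos

theorem norm_le_inv_sin_of_re_pow_eq_zero {N : ℕ} (hN : N ≠ 0) {ζ : ℂ} (him : ζ.im = 1)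
    (hre : (ζ ^ N).re = 0) : ‖ζ‖ ≤ (Real.sin (π / (2 * N)))⁻¹ := by
  have hζ : 0 < ‖ζ‖ := norm_pos_iff.2 fun h => by simp [h] at him
  have hsin : Real.sin ζ.arg = ‖ζ‖⁻¹ := by rw [Complex.sin_arg, him, one_div]
  have harg_lt : ζ.arg < π := Complex.arg_lt_pi_iff.2 (.inr (by simp [him]))
  have harg_pos : 0 < ζ.arg := by
    refine (Complex.arg_nonneg_iff.2 (by simp [him])).lt_of_ne fun h => ?_
    rw [← h, Real.sin_zero] at hsin
    exact (inv_pos.2 hζ).ne hsin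
  have hcos : Real.cos (N * ζ.arg) = 0 := by
    rw [← Complex.norm_mul_exp_arg_mul_I ζ, mul_pow, ← Complex.exp_nat_mul, ← mul_assoc] at hre
    rw [← Complex.ofReal_pow, Complex.re_ofReal_mul] at hre
    have hexp := (mul_eq_zero.1 hre).resolve_left (pow_pos hζ N).ne'
    rwa [← Complex.ofReal_natCast, ← Complex.ofReal_mul, Complex.exp_ofReal_mul_I_re] at hexp
  have hlower := pi_div_two_mul_le_of_cos_nat_mul_eq_zero hN harg_pos hcos
  have hupper := pi_div_two_mul_le_of_cos_nat_mul_eq_zero hN (sub_pos.2 harg_lt)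
    (by rw [mul_sub, Real.cos_nat_mul_pi_sub, hcos, mul_zero])
  have hpos : 0 < π / (2 * N) := by positivity
  rw [le_inv_comm₀ hζ (sin_pi_div_two_mul_pos hN), ← hsin]
  rcases le_total ζ.arg (π / 2) with h | h
  · exact Real.sin_le_sin_of_le_of_le_pi_div_two (by linarith) h hlower
  · rw [← Real.sin_pi_sub ζ.arg]
    exact Real.sin_le_sin_of_le_of_le_pi_div_two (by linarith) (by linarith) hupper

theorem bConst_eq {m : ℕ} (hm : 1 ≤ m) :
    bConst m = (Real.sin (π / (2 * (2 * m - 1 : ℕ))))⁻¹ ^ (2 * m - 1) := by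
  rw [bConst, Nat.cast_sub (by lia)]
  push_cast
  ring_nf

theorem bConst_pos {m : ℕ} (hm : 1 ≤ m) : 0 < bConst m := by
  rw [bConst_eq hm]
  exact pow_pos (inv_pos.2 (sin_pi_div_two_mul_pos (by lia))) _

theorem complexNormSq_one_right (s : ℝ) : complexNormSq s (1 : ℝ) = (s + Complex.I) ^ 2 := by
  apply Complex.ext
  · rw [re_complexNormSq]; simp [sq]
  · rw [im_complexNormSq]; simp [sq]; ring

theorem tendsto_re_add_I_pow_cocompact {m : ℕ} (hm : 1 ≤ m) :
    Tendsto (fun s : ℝ => (((s : ℂ) + Complex.I) ^ (2 * m)).re) (cocompact ℝ) atTop := by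
  obtain ⟨δ, hδ, hclose⟩ := exists_norm_complexNormSq_pow_sub_le ℝ m
  have hnorm := tendsto_norm_cocompact_atTop (E := ℝ)
  refine tendsto_atTop_mono' _ ?_ (((tendsto_pow_atTop (show 2 * m ≠ 0 by lia)).comp
    hnorm).const_mul_atTop (show (0 : ℝ) < 3 / 4 by norm_num))
  filter_upwards [hnorm.eventually_ge_atTop δ⁻¹] with s hs
  have hnear := hclose s 1 (by simpa [inv_le_iff_one_le_mul₀' hδ] using hs)
  rw [complexNormSq_one_right, ← pow_mul, ← Complex.ofReal_pow] at hnear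
  have hre := neg_le_of_abs_le ((Complex.abs_re_le_norm _).trans hnear)
  rw [Complex.sub_re, Complex.ofReal_re] at hre
  simp only [Function.comp_apply]
  linarith

theorem neg_bConst_le_re_add_I_pow {m : ℕ} (hm : 1 ≤ m) (s : ℝ) :
    -bConst m ≤ (((s : ℂ) + Complex.I) ^ (2 * m)).re := by
  set p : ℝ → ℝ := fun s => (((s : ℂ) + Complex.I) ^ (2 * m)).re
  obtain ⟨t, ht⟩ := (show Continuous p by fun_prop).exists_forall_le
    (tendsto_re_add_I_pow_cocompact hm)
  refine le_trans ?_ (ht s)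
  set ζ : ℂ := t + Complex.I
  have him : ζ.im = 1 := by simp [ζ]
  have hderiv : HasDerivAt p (((2 * m : ℕ) * ζ ^ (2 * m - 1) * 1 : ℂ).re) t :=
    (((hasDerivAt_id (t : ℂ)).add_const Complex.I).pow (2 * m)).real_of_complex
  have hcrit : (ζ ^ (2 * m - 1)).re = 0 := by
    have hmin : IsLocalMin p t := Eventually.of_forall ht
    have hzero := hmin.hasDerivAt_eq_zero hderiv
    rw [mul_one, ← Complex.ofReal_natCast, Complex.re_ofReal_mul] at hzero
    exact (mul_eq_zero.1 hzero).resolve_left (Nat.cast_ne_zero.2 (by lia))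
  have hvalue : p t = -(ζ ^ (2 * m - 1)).im := by
    have hpow : ζ ^ (2 * m) = ζ ^ (2 * m - 1) * ζ := by rw [← pow_succ]; congr 1; lia
    change (ζ ^ (2 * m)).re = _
    rw [hpow, Complex.mul_re, hcrit, him]
    ring
  rw [hvalue, neg_le_neg_iff, bConst_eq hm]
  refine (Complex.im_le_norm _).trans ((norm_pow ζ _).trans_le ?_)
  exact pow_le_pow_left₀ (norm_nonneg _) (norm_le_inv_sin_of_re_pow_eq_zero (by lia) him hcrit) _

theorem neg_bConst_mul_im_pow_le_re_pow {m : ℕ} (hm : 1 ≤ m) (ζ : ℂ) :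
    -(bConst m * ζ.im ^ (2 * m)) ≤ (ζ ^ (2 * m)).re := by
  by_cases him : ζ.im = 0
  · have hreal : ζ = ζ.re := Complex.ext rfl him
    rw [him, zero_pow (by lia), mul_zero, neg_zero, hreal, ← Complex.ofReal_pow, Complex.ofReal_re]
    exact (even_two_mul m).pow_nonneg _
  · have hfactor : ζ = (ζ.im : ℂ) * ((ζ.re / ζ.im : ℝ) + Complex.I) := by
      apply Complex.ext <;> simp [mul_div_cancel₀ _ him]
    conv_rhs => rw [hfactor, mul_pow, ← Complex.ofReal_pow, Complex.re_ofReal_mul]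
    rw [← neg_mul, mul_comm]
    exact mul_le_mul_of_nonneg_left (neg_bConst_le_re_add_I_pow hm _)
      ((even_two_mul m).pow_nonneg _)

-- The imaginary part of a square root of `w` has square `(‖w‖ - Re w) / 2`.
theorem neg_bConst_mul_pow_le_re_pow {m : ℕ} (hm : 1 ≤ m) (w : ℂ) :
    -(bConst m * ((‖w‖ - w.re) / 2) ^ m) ≤ (w ^ m).re := by
  obtain ⟨ζ, rfl⟩ := IsAlgClosed.exists_pow_nat_eq w two_pos
  have him : (‖ζ ^ 2‖ - (ζ ^ 2).re) / 2 = ζ.im ^ 2 := by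
    rw [norm_pow, Complex.sq_norm, Complex.normSq_apply, sq ζ, Complex.mul_re]
    ring
  rw [him, ← pow_mul, ← pow_mul]
  exact neg_bConst_mul_im_pow_le_re_pow hm ζ

theorem neg_bConst_mul_norm_pow_le_re_complexNormSq_pow {E : Type*} [NormedAddCommGroup E]
    [InnerProductSpace ℝ E] {m : ℕ} (hm : 1 ≤ m) (ξ η : E) :
    -(bConst m * ‖η‖ ^ (2 * m)) ≤ (complexNormSq ξ η ^ m).re := by
  refine le_trans ?_ (neg_bConst_mul_pow_le_re_pow hm _)
  have hb := bConst_pos hm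
  have hnonneg : 0 ≤ ‖complexNormSq ξ η‖ - (complexNormSq ξ η).re :=
    sub_nonneg.2 (Complex.re_le_norm _)
  rw [pow_mul]
  gcongr
  rw [re_complexNormSq]
  linarith [norm_complexNormSq_le ξ η]

end SymbolLowerBound

section SymbolDecay

variable {E : Type*} [NormedAddCommGroup E] [InnerProductSpace ℝ E] {m : ℕ}

theorem half_mul_le_re_mul_of_norm_sub_le {z w : ℂ} {r : ℝ} (hz : |z.im| ≤ z.re)
    (hw : ‖w - r‖ ≤ 4⁻¹ * r) : z.re * r / 2 ≤ (z * w).re := by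
  have hre := neg_le_of_abs_le ((Complex.abs_re_le_norm _).trans hw)
  have him := (Complex.abs_im_le_norm _).trans hw
  rw [Complex.sub_re, Complex.ofReal_re] at hre
  rw [Complex.sub_im, Complex.ofReal_im, sub_zero] at him
  have hz_nonneg := (abs_nonneg _).trans hz
  have hcross : z.im * w.im ≤ z.re * (4⁻¹ * r) :=
    (le_abs_self _).trans <| (abs_mul _ _).trans_le <|
      mul_le_mul hz him (abs_nonneg _) hz_nonneg
  have hdiag : z.re * (3 / 4 * r) ≤ z.re * w.re := by gcongr; linarith
  rw [Complex.mul_re]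
  linarith

theorem div_sub_one_le_mul_pow {s L t : ℝ} {k : ℕ} (hs : 0 ≤ s) (hL : 0 < L) (hk : k ≠ 0)
    (ht : 1 ≤ t * L ^ k) : s / L - 1 ≤ t * s ^ k := by
  have hbase : s / L - 1 ≤ (s / L) ^ k := by
    rcases le_total (s / L) 1 with h | h
    · exact (sub_nonpos.2 h).trans (by positivity)
    · linarith [le_self_pow₀ h hk]
  refine hbase.trans ?_
  rw [div_pow, div_le_iff₀ (by positivity)]
  linarith [mul_le_mul_of_nonneg_right ht (pow_nonneg hs k)]

theorem neg_mul_le_re_mul_complexNormSq_pow (hm : 1 ≤ m) {ξ η : E} {r κ : ℝ} {z : ℂ}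
    (hξ : ‖ξ‖ ≤ r * ‖η‖) (hz : 0 ≤ z.re) (hκ : |z.im| ≤ κ * z.re) :
    -(z.re * ((bConst m + (r ^ 2 + 1) ^ m * κ) * ‖η‖ ^ (2 * m))) ≤
      (z * complexNormSq ξ η ^ m).re := by
  set w := complexNormSq ξ η ^ m
  have hw : ‖w‖ ≤ (r ^ 2 + 1) ^ m * ‖η‖ ^ (2 * m) := by
    rw [norm_pow, pow_mul, ← mul_pow]
    gcongr
    refine (norm_complexNormSq_le ξ η).trans ?_
    linarith [mul_pow r ‖η‖ 2 ▸ pow_le_pow_left₀ (norm_nonneg ξ) hξ 2]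
  have hcross : z.im * w.im ≤ κ * z.re * ((r ^ 2 + 1) ^ m * ‖η‖ ^ (2 * m)) :=
    (le_abs_self _).trans <| (abs_mul _ _).trans_le <|
      mul_le_mul hκ ((Complex.abs_im_le_norm _).trans hw) (abs_nonneg _)
        ((abs_nonneg _).trans hκ)
  have hdiag := mul_le_mul_of_nonneg_left
    (neg_bConst_mul_norm_pow_le_re_complexNormSq_pow hm ξ η) hz
  rw [Complex.mul_re]
  linarith

-- For `‖η‖ ≤ δ ‖ξ‖` the symbol is close to `‖ξ‖ ^ (2 * m)`; otherwise `‖ξ‖ / L` is bounded and the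
-- sharp lower bound on the symbol applies.
variable (E) in
theorem exists_norm_exp_neg_mul_complexNormSq_pow_le (hm : 1 ≤ m) :
    ∃ C > 0, ∃ D > 0, ∀ (ξ η : E) (z : ℂ) (κ L : ℝ), κ ≤ 1 → 0 < z.re → |z.im| ≤ κ * z.re →
      0 < L → ‖η‖ ≤ 2 * L → 1 ≤ z.re * L ^ (2 * m) →
      ‖Complex.exp (-z * complexNormSq ξ η ^ m)‖ ≤
        C * Real.exp (z.re * ((bConst m + D * κ) * ‖η‖ ^ (2 * m))) *
          Real.exp (-((2 * L)⁻¹ * ‖ξ‖)) := by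
  obtain ⟨δ, hδ, hclose⟩ := exists_norm_complexNormSq_pow_sub_le E m
  refine ⟨Real.exp (1 / 2 + δ⁻¹), Real.exp_pos _, ((δ⁻¹) ^ 2 + 1) ^ m, by positivity, ?_⟩
  intro ξ η z κ L hκ hz hzκ hL hη hzL
  have hb := bConst_pos hm
  have hκ_nonneg : 0 ≤ κ := nonneg_of_mul_nonneg_left ((abs_nonneg _).trans hzκ) hz
  rw [Complex.norm_exp, ← Real.exp_add, ← Real.exp_add, Real.exp_le_exp, neg_mul, Complex.neg_re]
  have hδ_inv : 0 < δ⁻¹ := inv_pos.2 hδ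
  rcases le_total ‖η‖ (δ * ‖ξ‖) with hnear | hfar
  · have hzre : |z.im| ≤ z.re := hzκ.trans (mul_le_of_le_one_left hz.le hκ)
    have hre := half_mul_le_re_mul_of_norm_sub_le (r := ‖ξ‖ ^ (2 * m)) hzre
      (by simpa using hclose ξ η hnear)
    have hscale := div_sub_one_le_mul_pow (norm_nonneg ξ) hL (by lia) hzL
    have hgrowth : 0 ≤ z.re * ((bConst m + ((δ⁻¹) ^ 2 + 1) ^ m * κ) * ‖η‖ ^ (2 * m)) := by
      positivity
    have hdecay : (2 * L)⁻¹ * ‖ξ‖ = ‖ξ‖ / L / 2 := by field_simp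
    linarith
  · have hξ : ‖ξ‖ ≤ δ⁻¹ * ‖η‖ := (le_inv_mul_iff₀ hδ).2 hfar
    have hre := neg_mul_le_re_mul_complexNormSq_pow hm hξ hz.le hzκ
    have hdecay : (2 * L)⁻¹ * ‖ξ‖ ≤ δ⁻¹ := by
      rw [inv_mul_le_iff₀ (by positivity), mul_comm]
      exact hξ.trans (by gcongr)
    linarith

end SymbolDecay

section PolyharmonicHeatKernel

variable {E : Type*} [NormedAddCommGroup E] [InnerProductSpace ℝ E] {m : ℕ}

/-- The frequency scale `lam + t ^ (-1 / (2 m))` at which the heat flow of order `2m`, conjugated by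
an exponential of rate `lam`, acts at time `t`. -/
noncomputable def freqScale (m : ℕ) (lam t : ℝ) : ℝ := lam + t⁻¹ ^ ((2 * m : ℕ) : ℝ)⁻¹

theorem freqScale_pos {lam t : ℝ} (hlam : 0 ≤ lam) (ht : 0 < t) : 0 < freqScale m lam t :=
  add_pos_of_nonneg_of_pos hlam (Real.rpow_pos_of_pos (inv_pos.2 ht) _)

theorem measurable_freqScale (m : ℕ) (lam : ℝ) : Measurable (freqScale m lam) := by
  unfold freqScale
  fun_prop

theorem mul_inv_rpow_inv_pow {k : ℕ} (hk : k ≠ 0) {t : ℝ} (ht : 0 < t) :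
    t * (t⁻¹ ^ (k : ℝ)⁻¹) ^ k = 1 := by
  rw [Real.rpow_inv_natCast_pow (inv_pos.2 ht).le hk, mul_inv_cancel₀ ht.ne']

theorem one_le_mul_freqScale_pow (hm : 1 ≤ m) {lam t : ℝ} (hlam : 0 ≤ lam) (ht : 0 < t) :
    1 ≤ t * freqScale m lam t ^ (2 * m) := by
  rw [← mul_inv_rpow_inv_pow (k := 2 * m) (by lia) ht, freqScale]
  gcongr
  exact le_add_of_nonneg_left hlam

/-- The integrand `e^{i x·ζ - z (ζ·ζ)^m}` of the kernel of `e^{-z (-Δ)^m}`, at the complex frequency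
`ζ = ξ + iη`. -/
noncomputable def polyHeatIntegrand (m : ℕ) (z : ℂ) (x ξ η : E) : ℂ :=
  Complex.exp (Complex.I * (inner ℝ x ξ : ℝ) - (inner ℝ x η : ℝ)) *
    Complex.exp (-z * complexNormSq ξ η ^ m)

theorem norm_polyHeatIntegrand (m : ℕ) (z : ℂ) (x ξ η : E) :
    ‖polyHeatIntegrand m z x ξ η‖ =
      Real.exp (-inner ℝ x η) * ‖Complex.exp (-z * complexNormSq ξ η ^ m)‖ := by
  rw [polyHeatIntegrand, norm_mul, Complex.norm_exp]
  simp

theorem continuous_polyHeatIntegrand (m : ℕ) (z : ℂ) (x η : E) :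
    Continuous fun ξ => polyHeatIntegrand m z x ξ η := by
  have := continuous_complexNormSq_left η
  unfold polyHeatIntegrand
  fun_prop

theorem differentiable_polyHeatIntegrand_time (m : ℕ) (x ξ η : E) :
    Differentiable ℂ fun z => polyHeatIntegrand m z x ξ η := by
  unfold polyHeatIntegrand
  fun_prop

theorem differentiable_polyHeatIntegrand_frequency (m : ℕ) (z : ℂ) (x ξ η : E) :
    Differentiable ℂ fun w : ℂ => polyHeatIntegrand m z x (ξ + w.re • η) (w.im • η) := by
  have hphase : ∀ w : ℂ, Complex.I * (inner ℝ x (ξ + w.re • η) : ℝ) - (inner ℝ x (w.im • η) : ℝ) =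
      Complex.I * ((inner ℝ x ξ : ℝ) + w * (inner ℝ x η : ℝ)) := fun w => by
    rw [inner_add_right, real_inner_smul_right, real_inner_smul_right]
    apply Complex.ext <;> simp
  simp only [polyHeatIntegrand, hphase, complexNormSq_add_smul]
  fun_prop

variable [FiniteDimensional ℝ E] [MeasurableSpace E] [BorelSpace E]

/-- The kernel of `e^{-z (-Δ)^m}` without its normalising factor `(2π)^{-d}`. -/
noncomputable def polyHeatKernel (m : ℕ) (z : ℂ) (x : E) : ℂ :=
  ∫ ξ, polyHeatIntegrand m z x ξ 0

theorem exists_integrable_norm_polyHeatIntegrand_le (hm : 1 ≤ m) (x : E) {R ρ T : ℝ} (hR : 0 ≤ R)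
    (hρ : 0 < ρ) :
    ∃ g : E → ℝ, Integrable g ∧ ∀ z : ℂ, ρ ≤ z.re → z.re ≤ T → |z.im| ≤ z.re →
      ∀ ξ u v : E, ‖u‖ ≤ R → ‖v‖ ≤ R → ‖polyHeatIntegrand m z x (ξ + u) v‖ ≤ g ξ := by
  obtain ⟨C, hC, D, hD, hdecay⟩ := exists_norm_exp_neg_mul_complexNormSq_pow_le E hm
  have hb := bConst_pos hm
  set L := freqScale m R ρ
  have hL : 0 < L := freqScale_pos hR hρ
  have hRL : R ≤ L := le_add_of_nonneg_right (by positivity)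
  refine ⟨fun ξ => Real.exp (‖x‖ * R) * (C * Real.exp (T * ((bConst m + D * 1) * R ^ (2 * m))) *
    (Real.exp ((2 * L)⁻¹ * R) * Real.exp (-((2 * L)⁻¹ * ‖ξ‖)))),
    (((integrable_exp_neg_mul_norm volume (by positivity)).const_mul _).const_mul _).const_mul _,
    fun z hzρ hzT hz ξ u v hu hv => ?_⟩
  have hexp := hdecay (ξ + u) v z 1 L le_rfl (hρ.trans_le hzρ) (by simpa using hz) hL (by linarith)
    ((one_le_mul_freqScale_pow hm hR hρ).trans (by gcongr))
  have hinner : -inner ℝ x v ≤ ‖x‖ * R :=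
    (neg_le_abs _).trans ((abs_real_inner_le_norm x v).trans (by gcongr))
  have htranslate : -((2 * L)⁻¹ * ‖ξ + u‖) ≤ (2 * L)⁻¹ * R + -((2 * L)⁻¹ * ‖ξ‖) := by
    have htriangle := norm_sub_le (ξ + u) u
    rw [add_sub_cancel_right] at htriangle
    have hnorm : ‖ξ‖ - R ≤ ‖ξ + u‖ := by linarith
    linarith [mul_le_mul_of_nonneg_left hnorm (show 0 ≤ (2 * L)⁻¹ by positivity)]
  rw [norm_polyHeatIntegrand]
  refine mul_le_mul (Real.exp_le_exp.2 hinner) (hexp.trans ?_) (norm_nonneg _) (by positivity)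
  rw [← Real.exp_add ((2 * L)⁻¹ * R)]
  have hz_pos : 0 < z.re := hρ.trans_le hzρ
  have hT : 0 ≤ T := hz_pos.le.trans hzT
  gcongr

theorem differentiableOn_polyHeatKernel (hm : 1 ≤ m) (x : E) :
    DifferentiableOn ℂ (fun z => polyHeatKernel m z x) (sector 1) := by
  refine differentiableOn_integral_of_locally_dominated (isOpen_sector 1)
    (fun z _ => (continuous_polyHeatIntegrand m z x 0).aestronglyMeasurable)
    (Eventually.of_forall fun ξ => (differentiable_polyHeatIntegrand_time m x ξ 0).differentiableOn)
    fun z₀ hz₀ => ?_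
  have hz₀_re := re_pos_of_mem_sector one_pos hz₀
  obtain ⟨g, hg, hle⟩ := exists_integrable_norm_polyHeatIntegrand_le hm x (T := 2 * z₀.re) le_rfl
    (half_pos hz₀_re)
  refine ⟨g, hg, Complex.re ⁻¹' Ioo (z₀.re / 2) (2 * z₀.re) ∩ sector 1, ?_, ?_⟩
  · exact ((isOpen_Ioo.preimage Complex.continuous_re).inter (isOpen_sector 1)).mem_nhds
      ⟨⟨by linarith, by linarith⟩, hz₀⟩
  · refine Eventually.of_forall fun ξ z hz => ?_
    have hsector : |z.im| ≤ z.re := by simpa using (mem_sector.1 hz.2).le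
    simpa using hle z hz.1.1.le hz.1.2.le hsector ξ 0 0 norm_zero.le norm_zero.le

-- The integral over `ℝᵈ + wη` is holomorphic in `w`, and constant for real `w` by translation
-- invariance.
theorem polyHeatKernel_eq_integral_shift (hm : 1 ≤ m) {z : ℂ} (hz : 0 < z.re)
    (hzi : |z.im| ≤ z.re) (x η : E) :
    polyHeatKernel m z x = ∫ ξ, polyHeatIntegrand m z x ξ η := by
  set F : ℂ → ℂ := fun w => ∫ ξ, polyHeatIntegrand m z x (ξ + w.re • η) (w.im • η) with hF
  have hdiff : DifferentiableOn ℂ F univ := by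
    refine differentiableOn_integral_of_locally_dominated isOpen_univ (fun w _ => ?_)
      (Eventually.of_forall fun ξ =>
        (differentiable_polyHeatIntegrand_frequency m z x ξ η).differentiableOn) fun w₀ _ => ?_
    · exact ((continuous_polyHeatIntegrand m z x _).comp
        (continuous_add_const _)).aestronglyMeasurable
    · obtain ⟨g, hg, hle⟩ := exists_integrable_norm_polyHeatIntegrand_le hm x (T := z.re)
        (R := (‖w₀‖ + 1) * ‖η‖) (by positivity) hz
      refine ⟨g, hg, {w | ‖w‖ < ‖w₀‖ + 1},
        (isOpen_lt continuous_norm continuous_const).mem_nhds (lt_add_one ‖w₀‖),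
        Eventually.of_forall fun ξ w hw => hle z le_rfl le_rfl hzi ξ _ _ ?_ ?_⟩ <;>
      rw [norm_smul] <;> gcongr
      exacts [(Complex.abs_re_le_norm w).trans hw.le, (Complex.abs_im_le_norm w).trans hw.le]
  have hreal : ∀ s : ℝ, F s = polyHeatKernel m z x := fun s => by
    simpa [hF, polyHeatKernel] using
      integral_add_right_eq_self (fun ξ => polyHeatIntegrand m z x ξ 0) (s • η)
  have hI := eqOn_const_of_eventually_eq_on_real isOpen_univ isPreconnected_univ hdiff (x₀ := 0)
    (mem_univ _) (Eventually.of_forall hreal) (mem_univ Complex.I)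
  simpa [hF] using hI.symm

variable (E) in
theorem exists_norm_polyHeatKernel_le (hm : 1 ≤ m) :
    ∃ C > 0, ∃ D > 0, ∀ (x η : E) (z : ℂ) (κ L : ℝ), κ ≤ 1 → 0 < z.re → |z.im| ≤ κ * z.re →
      0 < L → ‖η‖ ≤ 2 * L → 1 ≤ z.re * L ^ (2 * m) →
      ‖polyHeatKernel m z x‖ ≤ C * (L ^ Module.finrank ℝ E *
        Real.exp (z.re * ((bConst m + D * κ) * ‖η‖ ^ (2 * m)) - inner ℝ x η)) := by
  obtain ⟨C, hC, D, hD, hdecay⟩ := exists_norm_exp_neg_mul_complexNormSq_pow_le E hm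
  set J := ∫ x : E, Real.exp (-‖x‖)
  have hJ : 0 < J :=
    integral_exp_pos (by simpa using integrable_exp_neg_mul_norm (E := E) volume one_pos)
  refine ⟨C * (2 ^ Module.finrank ℝ E * J), by positivity, D, hD, ?_⟩
  intro x η z κ L hκ hz hzκ hL hη hzL
  rw [polyHeatKernel_eq_integral_shift hm hz (hzκ.trans (mul_le_of_le_one_left hz.le hκ)) x η]
  have hbound : ∀ ξ, ‖polyHeatIntegrand m z x ξ η‖ ≤
      C * Real.exp (z.re * ((bConst m + D * κ) * ‖η‖ ^ (2 * m)) - inner ℝ x η) *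
        Real.exp (-((2 * L)⁻¹ * ‖ξ‖)) := fun ξ => by
    rw [norm_polyHeatIntegrand, sub_eq_neg_add, Real.exp_add, mul_left_comm C, mul_assoc]
    gcongr
    exact hdecay ξ η z κ L hκ hz hzκ hL hη hzL
  have hint := integrable_exp_neg_mul_norm (E := E) volume (show 0 < (2 * L)⁻¹ by positivity)
  calc ‖∫ ξ, polyHeatIntegrand m z x ξ η‖
      ≤ ∫ ξ, _ := norm_integral_le_of_norm_le (hint.const_mul _) (Eventually.of_forall hbound)
    _ = _ := by
      rw [integral_const_mul, integral_exp_neg_mul_norm volume (by positivity), inv_inv, mul_pow]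
      ring

end PolyharmonicHeatKernel

section ExponentPerturbation

theorem one_add_pow_le_one_add_mul {y : ℝ} (hy : 0 ≤ y) (hy1 : y ≤ 1) (k : ℕ) :
    (1 + y) ^ k ≤ 1 + (2 ^ k - 1) * y := by
  have hconv := (convexOn_pow (𝕜 := ℝ) k).2 (mem_Ici.2 zero_le_one) (mem_Ici.2 zero_le_two)
    (sub_nonneg.2 hy1) hy (sub_add_cancel 1 y)
  simp only [smul_eq_mul, one_pow, mul_one] at hconv
  calc (1 + y) ^ k = (1 - y + y * 2) ^ k := by ring
    _ ≤ 1 - y + y * 2 ^ k := hconv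
    _ = 1 + (2 ^ k - 1) * y := by ring

theorem add_mul_one_add_pow_le {b D y : ℝ} (hb : 0 ≤ b) (hD : 0 ≤ D) (hy : 0 ≤ y) (hy1 : y ≤ 1)
    (k : ℕ) : (b + D * y) * (1 + y) ^ k ≤ b + 2 ^ k * (b + D) * y := by
  have hpow : (1 : ℝ) ≤ 2 ^ k := one_le_pow₀ one_le_two
  calc (b + D * y) * (1 + y) ^ k
      ≤ (b + D * y) * (1 + (2 ^ k - 1) * y) := by
        gcongr
        exact one_add_pow_le_one_add_mul hy hy1 k
    _ = b + (b * (2 ^ k - 1) + D + D * (2 ^ k - 1) * y) * y := by ring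
    _ ≤ b + (b * 2 ^ k + D + D * (2 ^ k - 1) * 1) * y := by
        have := sub_nonneg.2 hpow
        gcongr
        linarith
    _ = b + 2 ^ k * (b + D) * y := by ring

-- If `q ≤ lam`, the perturbation of `lam` is relatively small; otherwise `t * lam ^ k` is bounded.
theorem mul_perturbed_growth_le {b D h t q lam : ℝ} {k : ℕ} (hb : 0 ≤ b) (hD : 0 ≤ D) (hh : 0 ≤ h)
    (hh1 : 2 * h ≤ 1) (ht : 0 ≤ t) (hq : 0 ≤ q) (hlam : 0 ≤ lam) (htq : t * q ^ k = 1) :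
    t * ((b + D * (2 * h)) * (lam + h * (lam + q)) ^ k) ≤
      t * ((b + 2 ^ (k + 1) * (b + D) * h) * lam ^ k) + 2 ^ k * (b + D) := by
  rcases le_total q lam with hle | hle
  · have hbase : lam + h * (lam + q) ≤ (1 + 2 * h) * lam := by
      linarith [mul_le_mul_of_nonneg_left hle hh]
    have hmain : (b + D * (2 * h)) * (lam + h * (lam + q)) ^ k ≤
        (b + 2 ^ (k + 1) * (b + D) * h) * lam ^ k := by
      calc (b + D * (2 * h)) * (lam + h * (lam + q)) ^ k
          ≤ (b + D * (2 * h)) * ((1 + 2 * h) * lam) ^ k := by gcongr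
        _ = (b + D * (2 * h)) * (1 + 2 * h) ^ k * lam ^ k := by rw [mul_pow, mul_assoc]
        _ ≤ (b + 2 ^ k * (b + D) * (2 * h)) * lam ^ k := by
          gcongr
          exact add_mul_one_add_pow_le hb hD (by linarith) hh1 k
        _ = (b + 2 ^ (k + 1) * (b + D) * h) * lam ^ k := by ring
    exact le_add_of_le_of_nonneg (mul_le_mul_of_nonneg_left hmain ht) (by positivity)
  · have hbase : lam + h * (lam + q) ≤ 2 * q := by
      linarith [mul_le_mul_of_nonneg_left hle hh, mul_le_mul_of_nonneg_right hh1 hq]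
    refine le_add_of_nonneg_of_le (by positivity) ?_
    calc t * ((b + D * (2 * h)) * (lam + h * (lam + q)) ^ k)
        ≤ t * ((b + D * 1) * (2 * q) ^ k) := by gcongr
      _ = 2 ^ k * (b + D) * (t * q ^ k) := by rw [mul_pow]; ring
      _ = 2 ^ k * (b + D) := by rw [htq, mul_one]

end ExponentPerturbation

section ContourRotation

theorem exists_mem_sector_re_mul_eq {h : ℝ} (hh : 0 < h) (ν : ℂ) :
    ∃ p ∈ sector (2 * h), p.re = 1 ∧ |p.im| = h ∧ (ν * p).re = ν.re + h * |ν.im| := by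
  obtain ⟨y, hy, hyν⟩ : ∃ y : ℝ, |y| = h ∧ y * ν.im = -(h * |ν.im|) := by
    rcases abs_choice ν.im with him | him
    · exact ⟨-h, by rw [abs_neg, abs_of_pos hh], by rw [him]; ring⟩
    · exact ⟨h, abs_of_pos hh, by rw [him]; ring⟩
  refine ⟨⟨1, y⟩, ?_, rfl, hy, ?_⟩
  · rw [mem_sector, hy]
    linarith
  · rw [Complex.mul_re]
    linarith

-- The ray turns by the angle `arctan h`, towards the side on which `e^{-νz}` decays faster.
theorem norm_integral_Ioi_le_integral_ray {G : Type*} [NormedAddCommGroup G] [NormedSpace ℂ G]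
    [CompleteSpace G] {f : ℂ → G} {ν : ℂ} {M : ℝ → ℝ} {h C K : ℝ} (hh : 0 < h) (hh1 : h ≤ 1)
    (hν : 0 < ν.re) (hf : DifferentiableOn ℂ f (sector (2 * h))) (hC : 0 ≤ C)
    (hle : ∀ z ∈ sector (2 * h), ‖f z‖ ≤ C * (Real.exp (-(ν * z).re) * M z.re))
    (hM : ∀ t, 0 < t → M t ≤ K)
    (hint : IntegrableOn (fun t => Real.exp (-(ν.re + h * |ν.im|) * t) * M t) (Ioi 0)) :
    ‖∫ t in Ioi (0 : ℝ), f t‖ ≤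
      2 * C * ∫ t in Ioi (0 : ℝ), Real.exp (-(ν.re + h * |ν.im|) * t) * M t := by
  obtain ⟨p, hp, hp_re, hp_im, hνp⟩ := exists_mem_sector_re_mul_eq hh ν
  have hp_norm : ‖p‖ ≤ 2 := by
    linarith [Complex.norm_le_abs_re_add_abs_im p, hp_re ▸ abs_one (α := ℝ)]
  have hbound : ∀ z ∈ sector (2 * h), ‖f z‖ ≤ C * K * Real.exp (-(ν * z).re) := fun z hz => by
    rw [mul_assoc, mul_comm K]
    exact (hle z hz).trans (by gcongr; exact hM _ (re_pos_of_mem_sector (by positivity) hz))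
  have hν_lt : 0 < (ν * p).re := hνp ▸ by positivity
  have h1 : (1 : ℂ) ∈ sector (2 * h) := by simpa [mem_sector] using hh
  rw [integral_Ioi_eq_integral_ray (isOpen_sector (2 * h)) hf hbound h1 hν hp hν_lt,
    ← integral_const_mul]
  refine norm_integral_le_of_norm_le (hint.const_mul _) ?_
  filter_upwards [ae_restrict_mem measurableSet_Ioi] with t ht
  have hft := hle (t • p) ((sector (2 * h)).smul_mem ht hp)
  rw [mul_smul_comm, Complex.smul_re, Complex.smul_re, hνp, hp_re, smul_eq_mul, smul_eq_mul,
    mul_one, mul_comm t, ← neg_mul] at hft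
  rw [norm_smul, mul_assoc]
  gcongr

end ContourRotation

section ResolventKernel

variable {E : Type*} [NormedAddCommGroup E] [InnerProductSpace ℝ E] {m : ℕ}

theorem exists_norm_le_inner_eq_mul_norm (x : E) {τ : ℝ} (hτ : 0 ≤ τ) :
    ∃ u : E, ‖u‖ ≤ τ ∧ inner ℝ x u = τ * ‖x‖ := by
  rcases eq_or_ne x 0 with rfl | hx
  · exact ⟨0, by simpa using hτ, by simp⟩
  have hx' : ‖x‖ ≠ 0 := norm_ne_zero_iff.2 hx
  refine ⟨(τ / ‖x‖) • x, ?_, ?_⟩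
  · rw [norm_smul, norm_div, norm_norm, Real.norm_of_nonneg hτ, div_mul_cancel₀ _ hx']
  · rw [real_inner_smul_right, real_inner_self_eq_norm_mul_norm, ← mul_assoc,
      div_mul_cancel₀ _ hx']

variable [FiniteDimensional ℝ E] [MeasurableSpace E] [BorelSpace E]

variable (E) in
theorem exists_exp_mul_norm_polyHeatKernel_le (hm : 1 ≤ m) :
    ∃ C > 0, ∃ S > 0, ∀ (h lam : ℝ) (a x : E) (z : ℂ), 0 < h → 2 * h ≤ 1 → 0 ≤ lam → ‖a‖ ≤ 1 →
      z ∈ sector (2 * h) →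
      Real.exp (lam * inner ℝ a x) * ‖polyHeatKernel m z x‖ ≤
        C * Real.exp (z.re * ((bConst m + S * h) * lam ^ (2 * m))) *
          (freqScale m lam z.re ^ Module.finrank ℝ E *
            Real.exp (-(h * ‖x‖ * freqScale m lam z.re))) := by
  obtain ⟨C, hC, D, hD, hkernel⟩ := exists_norm_polyHeatKernel_le E hm
  have hb := bConst_pos hm
  refine ⟨C * Real.exp (2 ^ (2 * m) * (bConst m + D)), by positivity,
    2 ^ (2 * m + 1) * (bConst m + D), by positivity, ?_⟩
  intro h lam a x z hh hh1 hlam ha hz_sector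
  have hz := re_pos_of_mem_sector (by positivity) hz_sector
  set L := freqScale m lam z.re
  have hL : 0 < L := freqScale_pos hlam hz
  have hlamL : lam ≤ L := le_add_of_nonneg_right (by positivity)
  obtain ⟨u, hu, hxu⟩ := exists_norm_le_inner_eq_mul_norm x (mul_nonneg hh.le hL.le)
  have hη : ‖lam • a + u‖ ≤ lam + h * L := by
    refine (norm_add_le _ _).trans (add_le_add ?_ hu)
    rw [norm_smul, Real.norm_of_nonneg hlam]
    exact mul_le_of_le_one_right hlam ha
  have hgrowth : z.re * ((bConst m + D * (2 * h)) * ‖lam • a + u‖ ^ (2 * m)) ≤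
      z.re * ((bConst m + 2 ^ (2 * m + 1) * (bConst m + D) * h) * lam ^ (2 * m)) +
        2 ^ (2 * m) * (bConst m + D) :=
    le_trans (by gcongr; exact hη) (mul_perturbed_growth_le hb.le hD.le hh.le hh1 hz.le
      (by positivity) hlam (mul_inv_rpow_inv_pow (k := 2 * m) (by lia) hz))
  have hle := hkernel x (lam • a + u) z (2 * h) L hh1 hz (mem_sector.1 hz_sector).le hL
    (by linarith [mul_le_mul_of_nonneg_right hh1 hL.le]) (one_le_mul_freqScale_pow hm hlam hz)
  rw [inner_add_right, hxu, real_inner_smul_right, real_inner_comm] at hle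
  calc Real.exp (lam * inner ℝ a x) * ‖polyHeatKernel m z x‖
      ≤ Real.exp (lam * inner ℝ a x) * _ := mul_le_mul_of_nonneg_left hle (Real.exp_pos _).le
    _ = C * L ^ Module.finrank ℝ E * Real.exp (z.re * ((bConst m + D * (2 * h)) *
          ‖lam • a + u‖ ^ (2 * m)) - h * L * ‖x‖) := by
      rw [← mul_assoc C, mul_left_comm, ← Real.exp_add]
      congr 2
      ring
    _ ≤ C * L ^ Module.finrank ℝ E * Real.exp (2 ^ (2 * m) * (bConst m + D) +
          z.re * ((bConst m + 2 ^ (2 * m + 1) * (bConst m + D) * h) * lam ^ (2 * m)) +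
            -(h * ‖x‖ * L)) := by
      gcongr _ * Real.exp ?_
      linarith
    _ = _ := by rw [Real.exp_add, Real.exp_add]; ring

/-- The integrand `e^{-μz + lam a·x} H(z, x)` of the Laplace integral for the resolvent kernel,
where `H` is `polyHeatKernel` and `z` is a complex time. -/
noncomputable def resolventIntegrand (m : ℕ) (a : E) (lam : ℝ) (μ z : ℂ) (x : E) : ℂ :=
  Complex.exp (-μ * z + (lam * inner ℝ a x : ℝ)) * polyHeatKernel m z x

theorem differentiableOn_resolventIntegrand (hm : 1 ≤ m) (a : E) (lam : ℝ) (μ : ℂ) (x : E) :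
    DifferentiableOn ℂ (fun z => resolventIntegrand m a lam μ z x) (sector 1) := by
  have := differentiableOn_polyHeatKernel hm x
  unfold resolventIntegrand
  fun_prop

variable (E) in
theorem exists_norm_resolventIntegrand_le (hm : 1 ≤ m) :
    ∃ C > 0, ∃ S > 0, ∀ (h lam : ℝ) (a x : E) (μ z : ℂ), 0 < h → 2 * h ≤ 1 → 0 ≤ lam → ‖a‖ ≤ 1 →
      z ∈ sector (2 * h) →
      ‖resolventIntegrand m a lam μ z x‖ ≤
        C * (Real.exp (-((μ - ((bConst m + S * h) * lam ^ (2 * m) : ℝ)) * z).re) *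
          (freqScale m lam z.re ^ Module.finrank ℝ E *
            Real.exp (-(h * ‖x‖ * freqScale m lam z.re)))) := by
  obtain ⟨C, hC, S, hS, hkernel⟩ := exists_exp_mul_norm_polyHeatKernel_le E hm
  refine ⟨C, hC, S, hS, fun h lam a x μ z hh hh1 hlam ha hz => ?_⟩
  rw [resolventIntegrand, norm_mul, Complex.norm_exp, Complex.add_re, Complex.ofReal_re,
    Real.exp_add, mul_assoc]
  refine (mul_le_mul_of_nonneg_left (hkernel h lam a x z hh hh1 hlam ha hz)
    (Real.exp_pos _).le).trans_eq ?_
  rw [sub_mul, Complex.sub_re, Complex.re_ofReal_mul, neg_sub, sub_eq_add_neg, Real.exp_add,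
    neg_mul, Complex.neg_re, mul_comm z.re]
  ring

variable (E) in
theorem exists_integral_norm_laplace_resolventIntegrand_le [Nontrivial E] (hm : 1 ≤ m) :
    ∃ C > 0, ∃ S > 0, ∀ (h lam : ℝ) (a : E) (μ ν : ℂ), 0 < h → 2 * h ≤ 1 → 0 ≤ lam → ‖a‖ ≤ 1 →
      ν = μ - ((bConst m + S * h) * lam ^ (2 * m) : ℝ) → 0 < ν.re →
      ∫ x : E, ‖∫ t in Ioi (0 : ℝ), resolventIntegrand m a lam μ t x‖ ≤
        C * (h⁻¹ ^ Module.finrank ℝ E * (ν.re + h * |ν.im|)⁻¹) := by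
  obtain ⟨C, hC, S, hS, hle⟩ := exists_norm_resolventIntegrand_le E hm
  set J := ∫ x : E, Real.exp (-‖x‖)
  have hJ : 0 < J :=
    integral_exp_pos (by simpa using integrable_exp_neg_mul_norm (E := E) volume one_pos)
  refine ⟨2 * C * J, by positivity, S, hS, ?_⟩
  intro h lam a μ ν hh hh1 hlam ha hν hν_re
  refine (integral_norm_le_of_norm_le_spaceTimeMajorant volume (A := 2 * C)
    (γ := ν.re + h * |ν.im|) (measurable_freqScale m lam) (fun t ht => freqScale_pos hlam ht)
    (by positivity) hh ?_).trans_eq (by ring)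
  filter_upwards [Measure.ae_ne volume 0] with x hx hint
  have hhx : 0 < h * ‖x‖ := mul_pos hh (norm_pos_iff.2 hx)
  refine norm_integral_Ioi_le_integral_ray hh (by linarith) hν_re
    ((differentiableOn_resolventIntegrand hm a lam μ x).mono fun z hz => ?_) hC.le
    (fun z hz => hν ▸ hle h lam a x μ z hh hh1 hlam ha hz)
    (fun t ht => pow_mul_exp_neg_mul_le hhx (freqScale_pos hlam ht).le _) hint
  have hz_re := re_pos_of_mem_sector (by positivity) hz
  exact mem_sector.2 ((mem_sector.1 hz).trans_le (by gcongr))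

end ResolventKernel

section ConjugatedOperator

variable {n m : ℕ} {a : EuclideanSpace ℝ (Fin n)}

theorem Psymb_eq_complexNormSq_pow (ha : ‖a‖ = 1) (lam : ℝ) (ξ : EuclideanSpace ℝ (Fin n)) :
    Psymb n m a lam ξ = complexNormSq ξ (lam • a) ^ m := by
  rw [Psymb, complexNormSq, norm_smul, ha, mul_one, Real.norm_eq_abs, sq_abs,
    real_inner_smul_left, mul_assoc]

theorem Gker_eq_smul_polyHeatKernel (hm : 1 ≤ m) (ha : ‖a‖ = 1) (lam : ℝ) {t : ℝ} (ht : 0 < t)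
    (x : EuclideanSpace ℝ (Fin n)) :
    Gker n m a lam t x = ((2 * π) ^ (-(n : ℝ)) : ℝ) •
      (Complex.exp (lam * inner ℝ a x : ℝ) * polyHeatKernel m t x) := by
  have hshift := polyHeatKernel_eq_integral_shift hm (z := t) (by simpa using ht)
    (by simpa using ht.le) x (lam • a)
  rw [hshift, Gker, ← integral_const_mul]
  congr 2 with ξ
  rw [Psymb_eq_complexNormSq_pow ha, polyHeatIntegrand, real_inner_smul_right,
    real_inner_comm x a, ← mul_assoc, ← Complex.exp_add _ (_ - _), add_sub_cancel]

theorem resKer_eq_smul_integral_resolventIntegrand (hm : 1 ≤ m) (ha : ‖a‖ = 1) (lam : ℝ)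
    (x : EuclideanSpace ℝ (Fin n)) (μ : ℂ) :
    resKer n m a lam x μ = ((2 * π) ^ (-(n : ℝ)) : ℝ) •
      ∫ t in Ioi (0 : ℝ), resolventIntegrand m a lam μ t x := by
  rw [resKer, ← integral_smul]
  refine setIntegral_congr_fun measurableSet_Ioi fun t ht => ?_
  simp only [Gker_eq_smul_polyHeatKernel hm ha lam ht, resolventIntegrand, mul_smul_comm,
    Complex.exp_add, mul_assoc]

theorem mul_norm_le_re_add_mul_abs_im {h ω : ℝ} {ν : ℂ} (hh : 0 ≤ h) (hh1 : h ≤ 1) (hω : 0 ≤ ω)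
    (hων : ω ≤ ν.re) : h * ‖ν - ω‖ ≤ ν.re + h * |ν.im| := by
  have hnorm := Complex.norm_le_abs_re_add_abs_im (ν - ω)
  rw [Complex.sub_re, Complex.sub_im, Complex.ofReal_re, Complex.ofReal_im, sub_zero,
    abs_of_nonneg (sub_nonneg.2 hων)] at hnorm
  nlinarith

theorem exists_integral_norm_resKer_le (n : ℕ) [NeZero n] (hm : 1 ≤ m) :
    ∃ C > 0, ∃ S > 0, ∀ (h lam ω : ℝ) (a : EuclideanSpace ℝ (Fin n)) (μ : ℂ), 0 < h → 2 * h ≤ 1 →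
      0 ≤ lam → ‖a‖ = 1 → (bConst m + S * h) * lam ^ (2 * m) ≤ ω → ω < μ.re →
      ∫ x, ‖resKer n m a lam x μ‖ ≤ C * h⁻¹ ^ (n + 1) / ‖μ - ω‖ := by
  obtain ⟨C, hC, S, hS, hle⟩ :=
    exists_integral_norm_laplace_resolventIntegrand_le (EuclideanSpace ℝ (Fin n)) hm
  refine ⟨(2 * π) ^ (-(n : ℝ)) * C, by positivity, S, hS, ?_⟩
  intro h lam ω a μ hh hh1 hlam ha hω hωμ
  set B := (bConst m + S * h) * lam ^ (2 * m)
  have hdist : h * ‖μ - ω‖ ≤ (μ - B).re + h * |(μ - B).im| := by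
    have := mul_norm_le_re_add_mul_abs_im (ν := μ - B) hh.le (by linarith) (sub_nonneg.2 hω)
      (by simpa using hωμ.le)
    rwa [Complex.ofReal_sub, sub_sub_sub_cancel_right] at this
  have hν : 0 < (μ - B).re := by
    rw [Complex.sub_re, Complex.ofReal_re]
    linarith
  have hne : 0 < ‖μ - ω‖ := norm_pos_iff.2 fun h0 => by
    simp [sub_eq_zero.1 h0] at hωμ
  simp only [resKer_eq_smul_integral_resolventIntegrand hm ha, norm_smul]
  rw [integral_const_mul, Real.norm_of_nonneg (by positivity), mul_assoc, mul_div_assoc]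
  gcongr
  calc ∫ x, ‖∫ t in Ioi (0 : ℝ), resolventIntegrand m a lam μ t x‖
      ≤ C * (h⁻¹ ^ n * ((μ - B).re + h * |(μ - B).im|)⁻¹) := by
        simpa only [finrank_euclideanSpace_fin] using
          hle h lam a μ (μ - B) hh hh1 hlam ha.le rfl hν
    _ ≤ C * (h⁻¹ ^ n * (h * ‖μ - ω‖)⁻¹) := by gcongr
    _ = C * h⁻¹ ^ (n + 1) / ‖μ - ω‖ := by rw [mul_inv, pow_succ]; ring

end ConjugatedOperator

/-- there exist `c ∈ (0,1)` and `C > 0`, depending only on `n` and `m`, such that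
for all `ε ∈ (0,c)`, all `λ > 0`, all unit vectors `a`, and all complex `μ` with
`Re μ > (b_m + ε/2) λ^{2m}`, one has
`∫_{ℝⁿ} |h(x,μ)| dx ≤ C ε^{-(n+1)} / |μ - (b_m + ε/2) λ^{2m}|`. -/
theorem resolvent_kernel_L1_bound (n m : ℕ) (hn : 1 ≤ n) (hm : 1 ≤ m) :
    ∃ c ∈ Set.Ioo (0 : ℝ) 1, ∃ C > (0 : ℝ), ∀ ε ∈ Set.Ioo (0 : ℝ) c,
      ∀ lam : ℝ, 0 < lam → ∀ a : EuclideanSpace ℝ (Fin n), ‖a‖ = 1 →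
      ∀ μ : ℂ, (bConst m + ε / 2) * lam ^ (2 * m) < μ.re →
      ∫ x : EuclideanSpace ℝ (Fin n), ‖resKer n m a lam x μ‖ ≤
        C * ε ^ (-(n + 1 : ℤ)) / ‖μ - (((bConst m + ε / 2) * lam ^ (2 * m) : ℝ) : ℂ)‖ := by
  have : NeZero n := ⟨by lia⟩
  obtain ⟨C, hC, S, hS, hle⟩ := exists_integral_norm_resKer_le n hm
  set κ := (2 * (S + 1))⁻¹ with hκ_def
  have hκ : 0 < κ := by positivity
  have hSκ : S * κ + κ = 1 / 2 := by rw [hκ_def]; field_simp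
  refine ⟨1 / 2, by norm_num, C * κ⁻¹ ^ (n + 1), by positivity, ?_⟩
  intro ε ⟨hε, hε_half⟩ lam hlam a ha μ hμ
  have hh1 : 2 * (κ * ε) ≤ 1 := by nlinarith [mul_pos hS hκ]
  have hω : (bConst m + S * (κ * ε)) * lam ^ (2 * m) ≤ (bConst m + ε / 2) * lam ^ (2 * m) := by
    gcongr
    nlinarith
  have hpow : κ⁻¹ ^ (n + 1) * ε ^ (-(n + 1 : ℤ)) = (κ * ε)⁻¹ ^ (n + 1) := by
    rw [mul_inv, mul_pow, inv_pow ε, zpow_neg]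
    norm_cast
  rw [mul_assoc, hpow]
  exact hle (κ * ε) lam _ a μ (mul_pos hκ hε) hh1 hlam.le ha hω hμ
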